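/- arXiv:1111.1217 — 3 statements merged into one kernel-verified Lean document; each statement's English description precedes it below -/
import Mathlib

section
/- Let p, q, λ, Z be positive real numbers and let N, D, β, r₀ be real numbers with D ≠ 0. Then, as R → ∞, the normalized truncated Fresnel integral (1/(iλZ)) · ∫_{−R}^{R} ∫_{−R}^{R} exp( i·[ (2πN/D)(u·cosβ + v·sinβ) + (π/(λZ))·(p·(u − r₀)² + q·v²) ] ) du dv converges to (1/√(pq)) · exp( i·[ (2πN/D)·r₀·cosβ − (πλZN²/D²)·(cos²β/p + sin²β/q) ] ). -/
open Real Filter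

/-!
For `T ≤ S` and `0 ≤ re b`, integration by parts bounds `∫ x in T..S, exp (-b * x ^ 2)` by
`(‖b‖ * T)⁻¹`, uniformly up to the imaginary axis. Hence the rate at which the truncated Gaussian
integral converges for `0 < re b` persists, by continuity in `b`, for the purely imaginary
`b ≠ 0` of the Fresnel kernel. Completing the square and separating the two variables reduces
the propagated ripple to two such integrals, the product of whose values is
`(I * lam * Z / p) ^ (1 / 2) * (I * lam * Z / q) ^ (1 / 2) = I * lam * Z / √(p * q)`.
-/

namespace FresnelIntegral

open MeasureTheory Topology

theorem norm_integral_neg_inv_sq_mul_le {f : ℝ → ℂ} {C : ℝ} (hf : ∀ x, ‖f x‖ ≤ C) {S T : ℝ}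
    (hT : 0 < T) (hTS : T ≤ S) :
    ‖∫ x in T..S, -((x : ℂ) ^ 2)⁻¹ * f x‖ ≤ (T⁻¹ - S⁻¹) * C := by
  have zero_notMem : (0 : ℝ) ∉ Set.uIcc T S := by
    rw [Set.uIcc_of_le hTS]
    exact fun h => hT.not_ge h.1
  have integral_bound : ∫ x in T..S, x ^ (-2 : ℤ) * C = (T⁻¹ - S⁻¹) * C := by
    rw [intervalIntegral.integral_mul_const, integral_zpow (Or.inr ⟨by norm_num, zero_notMem⟩)]
    congr 1
    norm_num [div_neg]
  rw [← integral_bound]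
  refine intervalIntegral.norm_integral_le_of_norm_le hTS (ae_of_all _ fun x _ => ?_)
    ((intervalIntegral.intervalIntegrable_zpow (Or.inr zero_notMem)).mul_const C)
  rw [norm_mul, norm_neg, norm_inv, norm_pow, Complex.norm_real, Real.norm_eq_abs, sq_abs, zpow_neg]
  exact mul_le_mul_of_nonneg_left (hf x) (by positivity)

section Gaussian

variable {b : ℂ}

theorem norm_cexp_neg_mul_sq_le_one (hb : 0 ≤ b.re) (x : ℝ) :
    ‖Complex.exp (-b * (x : ℂ) ^ 2)‖ ≤ 1 := by
  rw [norm_cexp_neg_mul_sq, Real.exp_le_one_iff, neg_mul, neg_nonpos]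
  positivity

theorem intervalIntegrable_cexp_neg_mul_sq (b : ℂ) (s t : ℝ) :
    IntervalIntegrable (fun x : ℝ => Complex.exp (-b * (x : ℂ) ^ 2)) volume s t :=
  Continuous.intervalIntegrable (by fun_prop) s t

theorem hasDerivAt_neg_cexp_neg_mul_sq_div (hb : b ≠ 0) (x : ℝ) :
    HasDerivAt (fun y : ℝ => -Complex.exp (-b * (y : ℂ) ^ 2) / (2 * b))
      (x * Complex.exp (-b * (x : ℂ) ^ 2)) x := by
  have hexp : HasDerivAt (fun z : ℂ => Complex.exp (-b * z ^ 2))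
      (Complex.exp (-b * (x : ℂ) ^ 2) * (-b * (2 * x))) x := by
    simpa using ((hasDerivAt_pow 2 (x : ℂ)).const_mul (-b)).cexp
  refine (hexp.neg.div_const (2 * b)).comp_ofReal.congr_deriv ?_
  field_simp

theorem integral_cexp_neg_mul_sq_eq_by_parts (hb : b ≠ 0) {S T : ℝ} (hT : 0 < T) (hTS : T ≤ S) :
    ∫ x in T..S, Complex.exp (-b * (x : ℂ) ^ 2) =
      (S : ℂ)⁻¹ * (-Complex.exp (-b * (S : ℂ) ^ 2) / (2 * b))
        - (T : ℂ)⁻¹ * (-Complex.exp (-b * (T : ℂ) ^ 2) / (2 * b))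
        - ∫ x in T..S, -((x : ℂ) ^ 2)⁻¹ * (-Complex.exp (-b * (x : ℂ) ^ 2) / (2 * b)) := by
  have ne_zero : ∀ x ∈ Set.uIcc T S, (x : ℂ) ≠ 0 := fun x hx =>
    Complex.ofReal_ne_zero.2 (hT.trans_le (Set.uIcc_of_le hTS ▸ hx).1).ne'
  have hinv : ∀ x ∈ Set.uIcc T S,
      HasDerivAt (fun y : ℝ => (y : ℂ)⁻¹) (-((x : ℂ) ^ 2)⁻¹) x := fun x hx =>
    (hasDerivAt_inv (ne_zero x hx)).comp_ofReal
  have hinv_integrable :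
      IntervalIntegrable (fun x : ℝ => -((x : ℂ) ^ 2)⁻¹) volume T S := by
    refine ContinuousOn.intervalIntegrable (ContinuousOn.neg (ContinuousOn.inv₀ ?_ ?_))
    · fun_prop
    · exact fun x hx => pow_ne_zero 2 (ne_zero x hx)
  rw [← intervalIntegral.integral_mul_deriv_eq_deriv_mul hinv
    (fun x _ => hasDerivAt_neg_cexp_neg_mul_sq_div hb x) hinv_integrable
    (Continuous.intervalIntegrable (by fun_prop) T S)]
  exact intervalIntegral.integral_congr fun x hx => (inv_mul_cancel_left₀ (ne_zero x hx) _).symm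

theorem norm_integral_cexp_neg_mul_sq_le (hb : 0 ≤ b.re) (hb₀ : b ≠ 0) {S T : ℝ} (hT : 0 < T)
    (hTS : T ≤ S) : ‖∫ x in T..S, Complex.exp (-b * (x : ℂ) ^ 2)‖ ≤ (‖b‖ * T)⁻¹ := by
  have primitive_le (x : ℝ) :
      ‖-Complex.exp (-b * (x : ℂ) ^ 2) / (2 * b)‖ ≤ (2 * ‖b‖)⁻¹ := by
    rw [norm_div, norm_neg, norm_mul, Complex.norm_two, div_eq_mul_inv]
    exact mul_le_of_le_one_left (by positivity) (norm_cexp_neg_mul_sq_le_one hb x)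
  have boundary_le {x : ℝ} (hx : 0 < x) :
      ‖(x : ℂ)⁻¹ * (-Complex.exp (-b * (x : ℂ) ^ 2) / (2 * b))‖ ≤ x⁻¹ * (2 * ‖b‖)⁻¹ := by
    rw [norm_mul, norm_inv, Complex.norm_of_nonneg hx.le]
    gcongr
    exact primitive_le x
  rw [integral_cexp_neg_mul_sq_eq_by_parts hb₀ hT hTS]
  calc _ ≤ S⁻¹ * (2 * ‖b‖)⁻¹ + T⁻¹ * (2 * ‖b‖)⁻¹ + (T⁻¹ - S⁻¹) * (2 * ‖b‖)⁻¹ :=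
        norm_sub_le_of_le (norm_sub_le_of_le (boundary_le (hT.trans_le hTS)) (boundary_le hT))
          (norm_integral_neg_inv_sq_mul_le primitive_le hT hTS)
    _ = (‖b‖ * T)⁻¹ := by
        rw [mul_inv, mul_inv]
        ring

theorem norm_half_gaussian_sub_integral_le_of_re_pos (hb : 0 < b.re) {T : ℝ} (hT : 0 < T) :
    ‖(π / b) ^ (1 / 2 : ℂ) / 2 - ∫ x in (0 : ℝ)..T, Complex.exp (-b * (x : ℂ) ^ 2)‖
      ≤ (‖b‖ * T)⁻¹ := by
  have hb₀ : b ≠ 0 := by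
    rintro rfl
    exact hb.ne rfl
  have tail_tendsto : Tendsto (fun S : ℝ => ∫ x in T..S, Complex.exp (-b * (x : ℂ) ^ 2)) atTop
      (𝓝 ((π / b) ^ (1 / 2 : ℂ) / 2 - ∫ x in (0 : ℝ)..T, Complex.exp (-b * (x : ℂ) ^ 2))) := by
    rw [← integral_gaussian_complex_Ioi hb]
    refine ((intervalIntegral_tendsto_integral_Ioi 0
      (integrable_cexp_neg_mul_sq hb).integrableOn tendsto_id).sub_const _).congr fun S => ?_
    exact intervalIntegral.integral_interval_sub_left
      (intervalIntegrable_cexp_neg_mul_sq b 0 S) (intervalIntegrable_cexp_neg_mul_sq b 0 T)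
  refine le_of_tendsto tail_tendsto.norm ?_
  filter_upwards [eventually_ge_atTop T] with S hTS
  exact norm_integral_cexp_neg_mul_sq_le hb.le hb₀ hT hTS

theorem mem_slitPlane_of_re_nonneg (hb : 0 ≤ b.re) (hb₀ : b ≠ 0) : b ∈ Complex.slitPlane := by
  rw [Complex.mem_slitPlane_iff_not_le_zero, Complex.nonpos_iff]
  exact fun h => hb₀ (Complex.ext (h.1.antisymm hb) h.2)

theorem ofReal_div_mem_slitPlane {c : ℝ} (hc : 0 < c) (hb : 0 ≤ b.re) (hb₀ : b ≠ 0) :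
    (c : ℂ) / b ∈ Complex.slitPlane := by
  refine mem_slitPlane_of_re_nonneg ?_ (div_ne_zero (Complex.ofReal_ne_zero.2 hc.ne') hb₀)
  rw [div_eq_mul_inv, Complex.re_ofReal_mul, Complex.inv_re]
  exact mul_nonneg hc.le (div_nonneg hb (Complex.normSq_nonneg b))

theorem norm_half_gaussian_sub_integral_le (hb : 0 ≤ b.re) (hb₀ : b ≠ 0) {T : ℝ} (hT : 0 < T) :
    ‖(π / b) ^ (1 / 2 : ℂ) / 2 - ∫ x in (0 : ℝ)..T, Complex.exp (-b * (x : ℂ) ^ 2)‖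
      ≤ (‖b‖ * T)⁻¹ := by
  have mem_closure : b ∈ closure {z : ℂ | 0 < z.re} := by
    rwa [Complex.closure_setOfPred_lt_re]
  have integral_continuous :
      Continuous fun z : ℂ => ∫ x in (0 : ℝ)..T, Complex.exp (-z * (x : ℂ) ^ 2) :=
    intervalIntegral.continuous_parametric_intervalIntegral_of_continuous' (by fun_prop) 0 T
  have half_gaussian_continuousAt : ContinuousAt (fun z : ℂ => (π / z) ^ (1 / 2 : ℂ) / 2) b :=
    ((continuousAt_const.div continuousAt_id hb₀).cpow continuousAt_const
      (ofReal_div_mem_slitPlane pi_pos hb hb₀)).div_const 2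
  have bound_continuousAt : ContinuousAt (fun z : ℂ => (‖z‖ * T)⁻¹) b :=
    ContinuousAt.inv₀ (by fun_prop) (mul_ne_zero (norm_ne_zero_iff.2 hb₀) hT.ne')
  exact ContinuousWithinAt.closure_le mem_closure
    (half_gaussian_continuousAt.sub integral_continuous.continuousAt).norm.continuousWithinAt
    bound_continuousAt.continuousWithinAt
    fun z hz => norm_half_gaussian_sub_integral_le_of_re_pos hz hT

theorem tendsto_integral_zero_cexp_neg_mul_sq (hb : 0 ≤ b.re) (hb₀ : b ≠ 0) :
    Tendsto (fun T : ℝ => ∫ x in (0 : ℝ)..T, Complex.exp (-b * (x : ℂ) ^ 2)) atTop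
      (𝓝 ((π / b) ^ (1 / 2 : ℂ) / 2)) := by
  have rate_tendsto : Tendsto (fun T : ℝ => (‖b‖ * T)⁻¹) atTop (𝓝 0) :=
    tendsto_inv_atTop_zero.comp (tendsto_id.const_mul_atTop (norm_pos_iff.2 hb₀))
  rw [tendsto_iff_norm_sub_tendsto_zero]
  refine squeeze_zero' (Eventually.of_forall fun T => norm_nonneg _) ?_ rate_tendsto
  filter_upwards [eventually_gt_atTop 0] with T hT
  rw [norm_sub_rev]
  exact norm_half_gaussian_sub_integral_le hb hb₀ hT

theorem integral_zero_neg_cexp_neg_mul_sq (b : ℂ) (T : ℝ) :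
    ∫ x in (0 : ℝ)..(-T), Complex.exp (-b * (x : ℂ) ^ 2) =
      -∫ x in (0 : ℝ)..T, Complex.exp (-b * (x : ℂ) ^ 2) := by
  have h := intervalIntegral.integral_comp_neg (a := -T) (b := 0)
    (fun x : ℝ => Complex.exp (-b * (x : ℂ) ^ 2))
  simp only [Complex.ofReal_neg, even_two.neg_pow, neg_zero, neg_neg] at h
  rw [intervalIntegral.integral_symm, h]

theorem tendsto_intervalIntegral_cexp_neg_mul_sq (hb : 0 ≤ b.re) (hb₀ : b ≠ 0) {ι : Type*}
    {l : Filter ι} {s t : ι → ℝ} (hs : Tendsto s l atBot) (ht : Tendsto t l atTop) :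
    Tendsto (fun i => ∫ x in s i..t i, Complex.exp (-b * (x : ℂ) ^ 2)) l
      (𝓝 ((π / b) ^ (1 / 2 : ℂ))) := by
  have half := tendsto_integral_zero_cexp_neg_mul_sq hb hb₀
  have sum := (half.comp ht).add (half.comp (tendsto_neg_atBot_atTop.comp hs))
  rw [add_halves] at sum
  refine sum.congr fun i => ?_
  simp only [Function.comp_apply]
  rw [integral_zero_neg_cexp_neg_mul_sq, ← sub_eq_add_neg]
  exact intervalIntegral.integral_interval_sub_left
    (intervalIntegrable_cexp_neg_mul_sq b 0 (t i)) (intervalIntegrable_cexp_neg_mul_sq b 0 (s i))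

end Gaussian

theorem cexp_linear_add_quadratic_eq {m : ℝ} (hm : m ≠ 0) (s r x : ℝ) :
    Complex.exp (Complex.I * ((s * x + m * (x - r) ^ 2 : ℝ) : ℂ)) =
      Complex.exp (Complex.I * ((s * r - s ^ 2 / (4 * m) : ℝ) : ℂ)) *
        Complex.exp (-(-(Complex.I * m)) * ((x - (r - s / (2 * m)) : ℝ) : ℂ) ^ 2) := by
  have complete_square : s * x + m * (x - r) ^ 2 =
      s * r - s ^ 2 / (4 * m) + m * (x - (r - s / (2 * m))) ^ 2 := by
    field_simp
    ring
  rw [complete_square, ← Complex.exp_add]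
  congr 1
  push_cast
  ring

theorem integral_integral_cexp_I_mul_add (f g : ℝ → ℝ) (a b c d : ℝ) :
    ∫ u in a..b, ∫ v in c..d, Complex.exp (Complex.I * ((f u + g v : ℝ) : ℂ)) =
      (∫ u in a..b, Complex.exp (Complex.I * (f u : ℂ))) *
        ∫ v in c..d, Complex.exp (Complex.I * (g v : ℂ)) := by
  simp only [Complex.ofReal_add, mul_add, Complex.exp_add, intervalIntegral.integral_const_mul,
    intervalIntegral.integral_mul_const]

theorem cpow_div_ofReal (z s : ℂ) {x : ℝ} (hx : 0 < x) :
    (z / x) ^ s = z ^ s / (x : ℂ) ^ s := by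
  have hxC : (x : ℂ) ≠ 0 := Complex.ofReal_ne_zero.2 hx.ne'
  rcases eq_or_ne z 0 with rfl | hz
  · rcases eq_or_ne s 0 with rfl | hs
    · simp
    · simp [Complex.zero_cpow hs]
  · have log_div : Complex.log (z / x) = Complex.log z - Complex.log x := by
      rw [div_eq_mul_inv, ← Complex.ofReal_inv, Complex.log_mul_ofReal _ (inv_pos.2 hx) _ hz,
        Real.log_inv, Complex.ofReal_neg, Complex.ofReal_log hx.le]
      ring
    rw [Complex.cpow_def_of_ne_zero (div_ne_zero hz hxC), Complex.cpow_def_of_ne_zero hz,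
      Complex.cpow_def_of_ne_zero hxC, log_div, sub_mul, Complex.exp_sub]

theorem ofReal_cpow_half {x : ℝ} (hx : 0 ≤ x) : (x : ℂ) ^ (1 / 2 : ℂ) = (√x : ℂ) := by
  rw [Real.sqrt_eq_rpow, Complex.ofReal_cpow hx]
  norm_num

theorem cpow_half_div_mul_cpow_half_div (z : ℂ) {x y : ℝ} (hx : 0 < x) (hy : 0 < y) :
    (z / x) ^ (1 / 2 : ℂ) * (z / y) ^ (1 / 2 : ℂ) = z * ((1 / √(x * y) : ℝ) : ℂ) := by
  have half_mul_half : z ^ (1 / 2 : ℂ) * z ^ (1 / 2 : ℂ) = z := by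
    rw [← pow_two, one_div]
    exact Complex.cpow_nat_inv_pow z two_ne_zero
  rw [cpow_div_ofReal z _ hx, cpow_div_ofReal z _ hy,
    ofReal_cpow_half hx.le, ofReal_cpow_half hy.le, div_mul_div_comm, half_mul_half,
    Real.sqrt_mul hx.le]
  push_cast
  ring

section Improper

variable {ι : Type*} {l : Filter ι} {a b c d : ι → ℝ}

theorem tendsto_integral_cexp_linear_add_quadratic {m : ℝ} (hm : m ≠ 0) (s r : ℝ)
    (ha : Tendsto a l atBot) (hb : Tendsto b l atTop) :
    Tendsto (fun i => ∫ x in a i..b i,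
        Complex.exp (Complex.I * ((s * x + m * (x - r) ^ 2 : ℝ) : ℂ))) l
      (𝓝 (Complex.exp (Complex.I * ((s * r - s ^ 2 / (4 * m) : ℝ) : ℂ)) *
        (Complex.I * π / m) ^ (1 / 2 : ℂ))) := by
  have hmC : (m : ℂ) ≠ 0 := Complex.ofReal_ne_zero.2 hm
  have hb₀ : -(Complex.I * m) ≠ 0 := neg_ne_zero.2 (mul_ne_zero Complex.I_ne_zero hmC)
  have gaussian_base : (π : ℂ) / -(Complex.I * m) = Complex.I * π / m := by
    field_simp
    simp
  simp only [cexp_linear_add_quadratic_eq hm s r, intervalIntegral.integral_const_mul]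
  rw [← gaussian_base]
  refine Tendsto.const_mul _ ((tendsto_intervalIntegral_cexp_neg_mul_sq (by simp) hb₀
    (tendsto_atBot_add_const_right l (-(r - s / (2 * m))) ha)
    (tendsto_atTop_add_const_right l (-(r - s / (2 * m))) hb)).congr fun i => ?_)
  exact (intervalIntegral.integral_comp_sub_right
    (fun y : ℝ => Complex.exp (-(-(Complex.I * m)) * (y : ℂ) ^ 2)) _).symm

theorem tendsto_integral_integral_cexp_linear_add_quadratic {m n : ℝ} (hm : m ≠ 0) (hn : n ≠ 0)
    (s t r w : ℝ) (ha : Tendsto a l atBot) (hb : Tendsto b l atTop) (hc : Tendsto c l atBot)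
    (hd : Tendsto d l atTop) :
    Tendsto (fun i => ∫ u in a i..b i, ∫ v in c i..d i,
        Complex.exp (Complex.I *
          (((s * u + m * (u - r) ^ 2) + (t * v + n * (v - w) ^ 2) : ℝ) : ℂ))) l
      (𝓝 (Complex.exp (Complex.I *
          (((s * r - s ^ 2 / (4 * m)) + (t * w - t ^ 2 / (4 * n)) : ℝ) : ℂ)) *
        ((Complex.I * π / m) ^ (1 / 2 : ℂ) * (Complex.I * π / n) ^ (1 / 2 : ℂ)))) := by
  simp only [integral_integral_cexp_I_mul_add (fun u => s * u + m * (u - r) ^ 2)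
    (fun v => t * v + n * (v - w) ^ 2)]
  rw [Complex.ofReal_add, mul_add, Complex.exp_add, mul_mul_mul_comm]
  exact (tendsto_integral_cexp_linear_add_quadratic hm s r ha hb).mul
    (tendsto_integral_cexp_linear_add_quadratic hn t w hc hd)

theorem tendsto_fresnel_planeWave {k p q : ℝ} (hk : k ≠ 0) (hp : 0 < p) (hq : 0 < q)
    (s t r w : ℝ) (ha : Tendsto a l atBot) (hb : Tendsto b l atTop) (hc : Tendsto c l atBot)
    (hd : Tendsto d l atTop) :
    Tendsto (fun i => (1 / (Complex.I * k)) * ∫ u in a i..b i, ∫ v in c i..d i,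
        Complex.exp (Complex.I *
          ((s * u + t * v + π / k * (p * (u - r) ^ 2 + q * (v - w) ^ 2) : ℝ) : ℂ))) l
      (𝓝 (((1 / √(p * q) : ℝ) : ℂ) * Complex.exp (Complex.I *
        ((s * r + t * w - k / (4 * π) * (s ^ 2 / p + t ^ 2 / q) : ℝ) : ℂ)))) := by
  have hkC : (k : ℂ) ≠ 0 := Complex.ofReal_ne_zero.2 hk
  have hπk : π / k ≠ 0 := div_ne_zero pi_ne_zero hk
  have base (x : ℝ) : Complex.I * π / ((π / k * x : ℝ) : ℂ) = Complex.I * k / x := by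
    have hπC : (π : ℂ) ≠ 0 := Complex.ofReal_ne_zero.2 pi_ne_zero
    push_cast
    field_simp
  have cancel_prefactor (E A : ℂ) : 1 / (Complex.I * k) * (E * (Complex.I * k * A)) = A * E := by
    field_simp
  have phase_separates (u v : ℝ) :
      s * u + t * v + π / k * (p * (u - r) ^ 2 + q * (v - w) ^ 2) =
        s * u + π / k * p * (u - r) ^ 2 + (t * v + π / k * q * (v - w) ^ 2) := by
    ring
  have limit_phase : s * r - s ^ 2 / (4 * (π / k * p)) + (t * w - t ^ 2 / (4 * (π / k * q))) =
      s * r + t * w - k / (4 * π) * (s ^ 2 / p + t ^ 2 / q) := by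
    field_simp
    ring
  have lim := (tendsto_integral_integral_cexp_linear_add_quadratic (mul_ne_zero hπk hp.ne')
    (mul_ne_zero hπk hq.ne') s t r w ha hb hc hd).const_mul (1 / (Complex.I * k))
  rw [base, base, cpow_half_div_mul_cpow_half_div _ hp hq, limit_phase, cancel_prefactor] at lim
  simpa only [phase_separates] using lim

end Improper

end FresnelIntegral

open FresnelIntegral in
theorem piaa_harmonic_ripple_propagation_general (p q lam Z : ℝ)
    (hp : 0 < p) (hq : 0 < q) (hlam : lam ≠ 0) (hZ : Z ≠ 0)
    (N D β r₀ : ℝ) (hD : D ≠ 0) :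
    Tendsto (fun R : ℝ =>
        (1 / (Complex.I * lam * Z)) *
          ∫ u in (-R)..R, ∫ v in (-R)..R,
            Complex.exp (Complex.I *
              ((((2 * π * N / D) * (u * Real.cos β + v * Real.sin β)
                + (π / (lam * Z)) * (p * (u - r₀) ^ 2 + q * v ^ 2)) : ℝ) : ℂ)))
      atTop
      (nhds (((1 / Real.sqrt (p * q) : ℝ) : ℂ) *
        Complex.exp (Complex.I *
          ((((2 * π * N / D) * r₀ * Real.cos β
            - (π * lam * Z * N ^ 2 / D ^ 2) *
                ((Real.cos β) ^ 2 / p + (Real.sin β) ^ 2 / q)) : ℝ) : ℂ)))) := by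
  have incident_phase (u v : ℝ) :
      2 * π * N / D * (u * Real.cos β + v * Real.sin β)
          + π / (lam * Z) * (p * (u - r₀) ^ 2 + q * v ^ 2) =
        2 * π * N / D * Real.cos β * u + 2 * π * N / D * Real.sin β * v
          + π / (lam * Z) * (p * (u - r₀) ^ 2 + q * (v - 0) ^ 2) := by
    ring
  have propagated_phase :
      2 * π * N / D * r₀ * Real.cos β
          - π * lam * Z * N ^ 2 / D ^ 2 * (Real.cos β ^ 2 / p + Real.sin β ^ 2 / q) =
        2 * π * N / D * Real.cos β * r₀ + 2 * π * N / D * Real.sin β * 0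
          - lam * Z / (4 * π) * ((2 * π * N / D * Real.cos β) ^ 2 / p
            + (2 * π * N / D * Real.sin β) ^ 2 / q) := by
    field_simp
    ring
  simp only [incident_phase, propagated_phase, mul_assoc Complex.I, ← Complex.ofReal_mul lam Z]
  exact tendsto_fresnel_planeWave (mul_ne_zero hlam hZ) hp hq _ _ r₀ 0
    tendsto_neg_atTop_atBot tendsto_id tendsto_neg_atTop_atBot tendsto_id

/-- Theorem 1 of the paper (square-truncation form): a harmonic ripple of spatial frequency
`N` and orientation `β`, propagated through the Fresnel-type PIAA kernel with radial
quadratic weight `p` and tangential weight `q`, emerges with amplitude `1/√(pq)`, the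
geometrically remapped phase `(2πN/D) r₀ cos β`, and the angular-spectrum phase
`-(πλZN²/D²)(cos²β/p + sin²β/q)`. -/
theorem piaa_harmonic_ripple_propagation (p q lam Z : ℝ)
    (hp : 0 < p) (hq : 0 < q) (hlam : 0 < lam) (hZ : 0 < Z)
    (N D β r₀ : ℝ) (hD : D ≠ 0) :
    Tendsto (fun R : ℝ =>
        (1 / (Complex.I * lam * Z)) *
          ∫ u in (-R)..R, ∫ v in (-R)..R,
            Complex.exp (Complex.I *
              ((((2 * π * N / D) * (u * Real.cos β + v * Real.sin β)
                + (π / (lam * Z)) * (p * (u - r₀) ^ 2 + q * v ^ 2)) : ℝ) : ℂ)))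
      atTop
      (nhds (((1 / Real.sqrt (p * q) : ℝ) : ℂ) *
        Complex.exp (Complex.I *
          ((((2 * π * N / D) * r₀ * Real.cos β
            - (π * lam * Z * N ^ 2 / D ^ 2) *
                ((Real.cos β) ^ 2 / p + (Real.sin β) ^ 2 / q)) : ℝ) : ℂ)))) :=
  piaa_harmonic_ripple_propagation_general p q lam Z hp hq hlam.ne' hZ.ne' N D β r₀ hD
end

section
/- Let a : ℤ → ℝ be a function with finite support, let ψ ∈ ℝ, and let λ, λ₀ > 0. Define c : ℤ → ℝ by c(k) = Σ_{p=0}^{∞} a(k + p)·ψ^p / p! (a finite sum for each k). Then the family k ↦ i^k·(λ₀/λ)^k·c(k) (k ∈ ℤ, i^k the integer power of the complex unit i) is summable, and exp(−i·(λ/λ₀)·ψ) · Σ_{k ∈ ℤ} i^k·(λ₀/λ)^k·a(k) = Σ_{k ∈ ℤ} i^k·(λ₀/λ)^k·c(k). -/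
open Complex

/-!
On the product index set `ℤ × ℕ` the bijection `(k, p) ↦ (k + p, p)` turns the Cauchy product of
a Laurent series in `z` with a power series in `z⁻¹` into a Laurent series in `z` whose
coefficients do not involve `z`. With `z = i λ₀ / λ` the propagator is `exp (ψ / z)`, a power
series in `z⁻¹` with real coefficients; all factors of `i` are carried by the powers of `z`, so
the new coefficients stay real.
-/

section LaurentProduct

variable {𝕜 : Type*} [NormedField 𝕜] [CompleteSpace 𝕜] {z : 𝕜} {a : ℤ → 𝕜} {b : ℕ → 𝕜}

theorem hasSum_prod_zpow_mul_add_mul (hz : z ≠ 0) (ha : Summable fun k => ‖z ^ k * a k‖)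
    (hb : Summable fun p => ‖b p / z ^ p‖) :
    HasSum (fun q : ℤ × ℕ => z ^ q.1 * (a (q.1 + q.2) * b q.2))
      ((∑' p, b p / z ^ p) * ∑' k, z ^ k * a k) := by
  let shift : ℤ × ℕ ≃ ℕ × ℤ :=
    (Equiv.prodComm ℤ ℕ).trans (Equiv.prodShear (Equiv.refl ℕ) fun p => Equiv.addRight (p : ℤ))
  have cauchy : HasSum (fun r : ℕ × ℤ => b r.1 / z ^ r.1 * (z ^ r.2 * a r.2))
      ((∑' p, b p / z ^ p) * ∑' k, z ^ k * a k) := by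
    rw [tsum_mul_tsum_of_summable_norm hb ha]
    exact (summable_mul_of_summable_norm hb ha).hasSum
  refine (shift.hasSum_iff.mpr cauchy).congr_fun fun ⟨k, p⟩ => ?_
  change z ^ k * (a (k + p) * b p) = b p / z ^ p * (z ^ (k + (p : ℤ)) * a (k + p))
  rw [zpow_add₀ hz, zpow_natCast]
  field_simp

theorem summable_add_mul_of_zpow (hz : z ≠ 0) (ha : Summable fun k => ‖z ^ k * a k‖)
    (hb : Summable fun p => ‖b p / z ^ p‖) (k : ℤ) :
    Summable fun p : ℕ => a (k + p) * b p :=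
  (summable_mul_left_iff (zpow_ne_zero k hz)).mp
    ((hasSum_prod_zpow_mul_add_mul hz ha hb).summable.prod_factor k)

theorem hasSum_zpow_mul_tsum_add_mul (hz : z ≠ 0) (ha : Summable fun k => ‖z ^ k * a k‖)
    (hb : Summable fun p => ‖b p / z ^ p‖) :
    HasSum (fun k : ℤ => z ^ k * ∑' p : ℕ, a (k + p) * b p)
      ((∑' p, b p / z ^ p) * ∑' k, z ^ k * a k) :=
  (hasSum_prod_zpow_mul_add_mul hz ha hb).prod_fiberwise fun k =>
    (summable_add_mul_of_zpow hz ha hb k).hasSum.mul_left _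

end LaurentProduct

/-- The coefficients `c(k) = ∑ₚ a(k + p) ψᵖ / p!` of the propagated field. They are defined over an
arbitrary topological field so that real coefficients can be compared with their complex images. -/
noncomputable def propagatedCoeff {𝕜 : Type*} [Field 𝕜] [TopologicalSpace 𝕜]
    (a : ℤ → 𝕜) (ψ : 𝕜) (k : ℤ) : 𝕜 :=
  ∑' p : ℕ, a (k + p) * ψ ^ p / p.factorial

theorem ofReal_propagatedCoeff (a : ℤ → ℝ) (ψ : ℝ) (k : ℤ) :
    ((propagatedCoeff a ψ k : ℝ) : ℂ) = propagatedCoeff (fun j => (a j : ℂ)) ψ k := by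
  simp only [propagatedCoeff, ofReal_tsum, ofReal_div, ofReal_mul, ofReal_pow, ofReal_natCast]

section ExponentialFactor

theorem pow_div_factorial_div_pow {𝕜 : Type*} [Field 𝕜] (ψ z : 𝕜) (p : ℕ) :
    ψ ^ p / p.factorial / z ^ p = (ψ / z) ^ p / p.factorial := by
  rw [div_pow, div_right_comm]

theorem summable_norm_pow_div_factorial_div_pow (ψ z : ℂ) :
    Summable fun p : ℕ => ‖ψ ^ p / p.factorial / z ^ p‖ := by
  simpa only [pow_div_factorial_div_pow] using NormedSpace.norm_expSeries_div_summable (ψ / z)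

theorem tsum_pow_div_factorial_div_pow (ψ z : ℂ) :
    ∑' p : ℕ, ψ ^ p / p.factorial / z ^ p = exp (ψ / z) := by
  simp only [pow_div_factorial_div_pow, exp_eq_exp_ℂ, NormedSpace.exp_eq_tsum_div]

variable {z : ℂ} {a : ℤ → ℂ}

theorem summable_add_mul_pow_div_factorial (hz : z ≠ 0) (ha : Summable fun k => z ^ k * a k)
    (ψ : ℂ) (k : ℤ) : Summable fun p : ℕ => a (k + p) * ψ ^ p / p.factorial := by
  simpa only [mul_div_assoc] using
    summable_add_mul_of_zpow hz ha.norm (summable_norm_pow_div_factorial_div_pow ψ z) k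

theorem hasSum_zpow_mul_propagatedCoeff (hz : z ≠ 0) (ha : Summable fun k => z ^ k * a k)
    (ψ : ℂ) :
    HasSum (fun k => z ^ k * propagatedCoeff a ψ k) (exp (ψ / z) * ∑' k, z ^ k * a k) := by
  simpa only [propagatedCoeff, mul_div_assoc, tsum_pow_div_factorial_div_pow] using
    hasSum_zpow_mul_tsum_add_mul hz ha.norm (summable_norm_pow_div_factorial_div_pow ψ z)

end ExponentialFactor

theorem neg_I_mul_ofReal_eq_div (ψ lam lam0 : ℝ) :
    -I * ((lam / lam0 * ψ : ℝ) : ℂ) = ψ / (I * ((lam0 / lam : ℝ) : ℂ)) := by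
  rw [div_eq_mul_inv (ψ : ℂ), mul_inv, inv_I, ← ofReal_inv, inv_div, ofReal_mul]
  ring

theorem summable_I_mul_zpow_mul_ofReal {a : ℤ → ℝ} {r : ℝ} (ha : Summable fun k => r ^ k * a k) :
    Summable fun k : ℤ => (I * (r : ℂ)) ^ k * (a k : ℂ) := by
  refine .of_norm (ha.norm.congr fun k => ?_)
  simp only [norm_mul, norm_zpow, norm_I, one_mul, norm_real]

theorem piaa_wavelength_expansion_general (a : ℤ → ℝ) (ψ lam lam0 : ℝ) (hlam : lam ≠ 0)
    (hlam0 : lam0 ≠ 0) (ha : Summable fun k : ℤ => (lam0 / lam) ^ k * a k) :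
    (∀ k : ℤ, Summable fun p : ℕ => a (k + p) * ψ ^ p / p.factorial) ∧
    Summable (fun k : ℤ => I ^ k * ((lam0 / lam : ℝ) : ℂ) ^ k * ((propagatedCoeff a ψ k : ℝ) : ℂ)) ∧
    exp (-I * ((lam / lam0 * ψ : ℝ) : ℂ)) *
        ∑' k : ℤ, I ^ k * ((lam0 / lam : ℝ) : ℂ) ^ k * (a k : ℂ)
      = ∑' k : ℤ, I ^ k * ((lam0 / lam : ℝ) : ℂ) ^ k * ((propagatedCoeff a ψ k : ℝ) : ℂ) := by
  have hz : I * ((lam0 / lam : ℝ) : ℂ) ≠ 0 :=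
    mul_ne_zero I_ne_zero (ofReal_ne_zero.mpr (div_ne_zero hlam0 hlam))
  have field_summable := summable_I_mul_zpow_mul_ofReal ha
  have propagated := hasSum_zpow_mul_propagatedCoeff hz field_summable ψ
  simp only [← mul_zpow, neg_I_mul_ofReal_eq_div, ofReal_propagatedCoeff]
  refine ⟨fun k => ?_, propagated.summable, propagated.tsum_eq.symm⟩
  exact_mod_cast summable_add_mul_pow_div_factorial hz field_summable ψ k

/-- Analytic core of Theorem 2 (wavelength expansion of the propagated field): a field
`Σ_k i^k (λ₀/λ)^k a(k)` with real, finitely supported coefficients, multiplied by the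
chromatic propagator `exp(-i (λ/λ₀) ψ)`, again has an expansion of the same form with
real coefficients `c(k) = Σ_p a(k+p) ψ^p / p!`. -/
theorem piaa_wavelength_expansion (a : ℤ → ℝ) (ha : (Function.support a).Finite)
    (ψ lam lam0 : ℝ) (hlam : 0 < lam) (hlam0 : 0 < lam0) :
    Summable (fun k : ℤ => Complex.I ^ k * ((lam0 / lam : ℝ) : ℂ) ^ k *
        ((∑' p : ℕ, a (k + p) * ψ ^ p / p.factorial : ℝ) : ℂ)) ∧
    Complex.exp (-Complex.I * (((lam / lam0) * ψ : ℝ) : ℂ)) *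
        ∑' k : ℤ, Complex.I ^ k * ((lam0 / lam : ℝ) : ℂ) ^ k * ((a k : ℝ) : ℂ)
      = ∑' k : ℤ, Complex.I ^ k * ((lam0 / lam : ℝ) : ℂ) ^ k *
          ((∑' p : ℕ, a (k + p) * ψ ^ p / p.factorial : ℝ) : ℂ) :=
  (piaa_wavelength_expansion_general a ψ lam lam0 hlam.ne' hlam0.ne' <|
    summable_of_hasFiniteSupport <| ha.subset <| Function.support_mul_subset_right _ a).2
end

section
/- Let p, q, λ, Z be positive real numbers, D ≠ 0 and r₀ real, let J be a finite index set, and for each j ∈ J let b_j ∈ ℂ and N_j, β_j ∈ ℝ. Then, as R → ∞, (1/(iλZ)) · ∫_{−R}^{R} ∫_{−R}^{R} ( 1 + Σ_{j ∈ J} b_j·exp( i(2πN_j/D)(u·cosβ_j + v·sinβ_j) ) ) · exp( i(π/(λZ))(p(u − r₀)² + q v²) ) du dv converges to (1/√(pq)) · ( 1 + Σ_{j ∈ J} b_j·exp( i(2πN_j/D)·r₀·cosβ_j )·exp( −i(πλZN_j²/D²)(cos²β_j/p + sin²β_j/q) ) ). -/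
open Real Filter

/-!
Integration by parts bounds the tail `∫ x in S..T, exp (-b x²)` by `1 / (‖b‖ S)`, uniformly over the
closed half-plane `0 ≤ Re b`. Hence the error in approximating the half-line Gaussian integral
`(π / b) ^ (1 / 2) / 2` by an integral over `[0, R]` is at most `1 / (‖b‖ R)` for `0 < Re b`, and
this estimate passes by continuity to the boundary `Re b = 0`, `b ≠ 0`, where it makes the
conditionally convergent Fresnel integral converge. A ripple only adds a linear phase: completing
the square moves the centre of the quadratic phase, which does not affect the limit, and leaves
behind the phases of the remapped ripple and of the angular-spectrum factor. The kernel separates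
in `u` and `v`, and the field is a finite superposition of ripples.
-/

section FresnelIntegral

open Complex MeasureTheory intervalIntegral

section GaussianTail

variable {b : ℂ} {S T R : ℝ}

lemma norm_cexp_neg_mul_sq_le_one (hb : 0 ≤ b.re) (x : ℝ) : ‖cexp (-b * (x : ℂ) ^ 2)‖ ≤ 1 := by
  rw [norm_cexp_neg_mul_sq, Real.exp_le_one_iff, neg_mul, neg_nonpos]
  positivity

lemma integral_cexp_neg_mul_sq_by_parts (hb₀ : b ≠ 0) (hS : 0 < S) (hST : S ≤ T) :
    ∫ x in S..T, cexp (-b * (x : ℂ) ^ 2) =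
      cexp (-b * (S : ℂ) ^ 2) / (2 * b * S) - cexp (-b * (T : ℂ) ^ 2) / (2 * b * T) -
        ∫ x in S..T, cexp (-b * (x : ℂ) ^ 2) / (2 * b * (x : ℂ) ^ 2) := by
  have ne_zero_of_mem : ∀ x ∈ Set.uIcc S T, (x : ℂ) ≠ 0 := fun x hx ↦ by
    rw [Set.uIcc_of_le hST] at hx
    exact_mod_cast (hS.trans_le hx.1).ne'
  have cont : Continuous fun x : ℝ ↦ cexp (-b * (x : ℂ) ^ 2) := by fun_prop
  have cont_div : ContinuousOn (fun x : ℝ ↦ cexp (-b * (x : ℂ) ^ 2) / (2 * b * (x : ℂ) ^ 2))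
      (Set.uIcc S T) :=
    cont.continuousOn.div (by fun_prop) fun x hx ↦ by simp [hb₀, ne_zero_of_mem x hx]
  have deriv_quotient : ∀ x ∈ Set.uIcc S T,
      HasDerivAt (fun y : ℝ ↦ -cexp (-b * (y : ℂ) ^ 2) / (2 * b * y))
        (cexp (-b * (x : ℂ) ^ 2) + cexp (-b * (x : ℂ) ^ 2) / (2 * b * (x : ℂ) ^ 2)) x := by
    intro x hx
    have hx₀ := ne_zero_of_mem x hx
    have num : HasDerivAt (fun z : ℂ ↦ -cexp (-b * z ^ 2))
        (-(cexp (-b * (x : ℂ) ^ 2) * (-b * (2 * x)))) x := by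
      simpa using (((hasDerivAt_pow 2 (x : ℂ)).const_mul (-b)).cexp).fun_neg
    have den : HasDerivAt (fun z : ℂ ↦ 2 * b * z) (2 * b) x := by
      simpa using (hasDerivAt_id (x : ℂ)).const_mul (2 * b)
    refine ((num.div den (by simp [hb₀, hx₀])).congr_deriv ?_).comp_ofReal
    field_simp
    ring
  have ftc := integral_eq_sub_of_hasDerivAt deriv_quotient
    (cont.continuousOn.add cont_div).intervalIntegrable
  rw [integral_add (cont.intervalIntegrable S T) cont_div.intervalIntegrable] at ftc
  rw [eq_sub_of_add_eq ftc]
  ring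

lemma norm_integral_cexp_neg_mul_sq_div_sq_le (hb : 0 ≤ b.re) (hS : 0 < S) (hST : S ≤ T) :
    ‖∫ x in S..T, cexp (-b * (x : ℂ) ^ 2) / (2 * b * (x : ℂ) ^ 2)‖ ≤
      1 / (2 * ‖b‖) * (1 / S - 1 / T) := by
  have zero_notMem : (0 : ℝ) ∉ Set.uIcc S T := fun h ↦ by
    rw [Set.uIcc_of_le hST] at h
    exact hS.not_ge h.1
  calc
    _ ≤ ∫ x in S..T, 1 / (2 * ‖b‖) * x ^ (-2 : ℤ) := by
      refine norm_integral_le_of_norm_le hST (ae_of_all _ fun x _ ↦ ?_)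
        ((intervalIntegrable_zpow (Or.inr zero_notMem)).const_mul _)
      simp only [norm_div, norm_mul, norm_pow, Complex.norm_ofNat, Complex.norm_real,
        Real.norm_eq_abs, sq_abs]
      rw [zpow_neg, zpow_ofNat, ← one_div, div_mul_div_comm, one_mul]
      gcongr
      exact norm_cexp_neg_mul_sq_le_one hb x
    _ = 1 / (2 * ‖b‖) * (1 / S - 1 / T) := by
      rw [intervalIntegral.integral_const_mul,
        integral_zpow (Or.inr ⟨by norm_num, zero_notMem⟩), show (-2 : ℤ) + 1 = -1 by rfl,
        zpow_neg_one, zpow_neg_one]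
      push_cast
      ring

lemma norm_integral_cexp_neg_mul_sq_le (hb : 0 ≤ b.re) (hb₀ : b ≠ 0) (hS : 0 < S) (hST : S ≤ T) :
    ‖∫ x in S..T, cexp (-b * (x : ℂ) ^ 2)‖ ≤ 1 / (‖b‖ * S) := by
  have boundary : ∀ x : ℝ, 0 < x →
      ‖cexp (-b * (x : ℂ) ^ 2) / (2 * b * x)‖ ≤ 1 / (2 * ‖b‖ * x) := fun x hx ↦ by
    simp only [norm_div, norm_mul, Complex.norm_ofNat, Complex.norm_of_nonneg hx.le]
    gcongr
    exact norm_cexp_neg_mul_sq_le_one hb x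
  rw [integral_cexp_neg_mul_sq_by_parts hb₀ hS hST]
  calc
    _ ≤ 1 / (2 * ‖b‖ * S) + 1 / (2 * ‖b‖ * T) + 1 / (2 * ‖b‖) * (1 / S - 1 / T) :=
      (norm_sub_le _ _).trans <| add_le_add
        ((norm_sub_le _ _).trans <| add_le_add (boundary S hS) (boundary T (hS.trans_le hST)))
        (norm_integral_cexp_neg_mul_sq_div_sq_le hb hS hST)
    _ = 1 / (‖b‖ * S) := by ring

lemma norm_integral_cexp_neg_mul_sq_sub_le_of_re_pos (hb : 0 < b.re) (hR : 0 < R) :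
    ‖(∫ x in (0 : ℝ)..R, cexp (-b * (x : ℂ) ^ 2)) - (π / b) ^ (1 / 2 : ℂ) / 2‖ ≤
      1 / (‖b‖ * R) := by
  have hb₀ : b ≠ 0 := fun h ↦ by simp [h] at hb
  have cont : Continuous fun x : ℝ ↦ cexp (-b * (x : ℂ) ^ 2) := by fun_prop
  have tail : Tendsto (fun T : ℝ ↦ ∫ x in R..T, cexp (-b * (x : ℂ) ^ 2)) atTop
      (nhds ((π / b) ^ (1 / 2 : ℂ) / 2 - ∫ x in (0 : ℝ)..R, cexp (-b * (x : ℂ) ^ 2))) := by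
    rw [← integral_gaussian_complex_Ioi hb]
    refine ((intervalIntegral_tendsto_integral_Ioi 0
      (integrable_cexp_neg_mul_sq hb).integrableOn tendsto_id).sub_const _).congr fun T ↦ ?_
    exact integral_interval_sub_left (cont.intervalIntegrable _ _) (cont.intervalIntegrable _ _)
  rw [norm_sub_rev]
  exact le_of_tendsto tail.norm <| (eventually_ge_atTop R).mono fun T hRT ↦
    norm_integral_cexp_neg_mul_sq_le hb.le hb₀ hR hRT

lemma pi_div_mem_slitPlane (hb : 0 ≤ b.re) (hb₀ : b ≠ 0) : (π / b : ℂ) ∈ Complex.slitPlane := by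
  have hsq : 0 < normSq b := normSq_pos.2 hb₀
  rw [mem_slitPlane_iff, div_re, div_im]
  simp only [ofReal_re, ofReal_im, zero_mul, zero_div, add_zero, zero_sub, neg_ne_zero]
  rcases hb.eq_or_lt with hre | hre
  · have him : b.im ≠ 0 := fun him ↦ hb₀ (Complex.ext hre.symm him)
    exact .inr (div_ne_zero (mul_ne_zero pi_ne_zero him) hsq.ne')
  · exact .inl (by positivity)

lemma norm_integral_cexp_neg_mul_sq_sub_le (hb : 0 ≤ b.re) (hb₀ : b ≠ 0) (hR : 0 < R) :
    ‖(∫ x in (0 : ℝ)..R, cexp (-b * (x : ℂ) ^ 2)) - (π / b) ^ (1 / 2 : ℂ) / 2‖ ≤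
      1 / (‖b‖ * R) := by
  have shift : Tendsto (fun ε : ℝ ↦ b + ε) (nhdsWithin 0 (Set.Ioi 0)) (nhds b) := by
    have : Continuous fun ε : ℝ ↦ b + ε := by fun_prop
    simpa using (this.tendsto 0).mono_left nhdsWithin_le_nhds
  have integral_cont : Continuous fun c : ℂ ↦ ∫ x in (0 : ℝ)..R, cexp (-c * (x : ℂ) ^ 2) := by
    fun_prop
  have value_cont : ContinuousAt (fun c : ℂ ↦ (π / c) ^ (1 / 2 : ℂ) / 2) b :=
    ((continuousAt_cpow_const (pi_div_mem_slitPlane hb hb₀)).comp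
      (f := fun c : ℂ ↦ π / c) (continuousAt_const.div continuousAt_id hb₀)).div_const 2
  have bound_cont : ContinuousAt (fun c : ℂ ↦ 1 / (‖c‖ * R)) b :=
    continuousAt_const.div (by fun_prop) (by positivity)
  refine le_of_tendsto_of_tendsto
    ((integral_cont.continuousAt.sub value_cont).norm.tendsto.comp shift)
    (bound_cont.tendsto.comp shift) ?_
  filter_upwards [self_mem_nhdsWithin] with ε (hε : 0 < ε)
  exact norm_integral_cexp_neg_mul_sq_sub_le_of_re_pos
    (by simpa using add_pos_of_nonneg_of_pos hb hε) hR

end GaussianTail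

section ImproperIntegral

variable {b : ℂ} {X : Type*} {l : Filter X} {x₁ x₂ y₁ y₂ : X → ℝ}

lemma tendsto_integral_zero_cexp_neg_mul_sq (hb : 0 ≤ b.re) (hb₀ : b ≠ 0) :
    Tendsto (fun R : ℝ ↦ ∫ x in (0 : ℝ)..R, cexp (-b * (x : ℂ) ^ 2)) atTop
      (nhds ((π / b) ^ (1 / 2 : ℂ) / 2)) := by
  rw [tendsto_iff_norm_sub_tendsto_zero]
  refine squeeze_zero' (Eventually.of_forall fun _ ↦ norm_nonneg _)
    ((eventually_gt_atTop 0).mono fun R hR ↦ norm_integral_cexp_neg_mul_sq_sub_le hb hb₀ hR) ?_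
  exact tendsto_const_nhds.div_atTop (tendsto_id.const_mul_atTop (norm_pos_iff.2 hb₀))

lemma tendsto_integral_cexp_neg_mul_sq (hb : 0 ≤ b.re) (hb₀ : b ≠ 0)
    (hx₁ : Tendsto x₁ l atBot) (hx₂ : Tendsto x₂ l atTop) :
    Tendsto (fun i ↦ ∫ x in x₁ i..x₂ i, cexp (-b * (x : ℂ) ^ 2)) l
      (nhds ((π / b) ^ (1 / 2 : ℂ))) := by
  have half := tendsto_integral_zero_cexp_neg_mul_sq hb hb₀
  have cont : Continuous fun x : ℝ ↦ cexp (-b * (x : ℂ) ^ 2) := by fun_prop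
  rw [← add_halves ((π / b : ℂ) ^ (1 / 2 : ℂ))]
  refine ((half.comp (tendsto_neg_atBot_atTop.comp hx₁)).add (half.comp hx₂)).congr fun i ↦ ?_
  have reflect := integral_comp_neg (a := x₁ i) (b := 0) fun x : ℝ ↦ cexp (-b * (x : ℂ) ^ 2)
  simp only [Complex.ofReal_neg, neg_sq, neg_zero] at reflect
  simp only [Function.comp_apply, ← reflect]
  exact integral_add_adjacent_intervals (cont.intervalIntegrable _ _) (cont.intervalIntegrable _ _)

lemma cpow_half_pi_div_neg_mul_I {a : ℝ} (ha : 0 < a) :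
    (π / -(a * I)) ^ (1 / 2 : ℂ) = √(π / a) * cexp (π / 4 * I) := by
  have rotate : (π / -(a * I) : ℂ) = ((π / a : ℝ) : ℂ) * I := by
    have ha₀ : (a : ℂ) ≠ 0 := mod_cast ha.ne'
    push_cast
    field_simp
    simp
  have modulus : (√(π / a) : ℂ) = cexp (Real.log (π / a) * (1 / 2)) := by
    rw [Real.sqrt_eq_rpow, Real.rpow_def_of_pos (by positivity)]
    push_cast
    rfl
  rw [rotate, cpow_def_of_ne_zero (mul_ne_zero (mod_cast (div_pos pi_pos ha).ne') I_ne_zero),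
    log_ofReal_mul (by positivity) I_ne_zero, log_I, add_mul, Complex.exp_add, modulus]
  ring_nf

lemma tendsto_integral_cexp_I_mul_quadratic {a : ℝ} (ha : 0 < a) (r k : ℝ)
    (hx₁ : Tendsto x₁ l atBot) (hx₂ : Tendsto x₂ l atTop) :
    Tendsto (fun i ↦ ∫ u in x₁ i..x₂ i, cexp (I * ((a * (u - r) ^ 2 + k * u : ℝ) : ℂ))) l
      (nhds (cexp (I * ((k * r - k ^ 2 / (4 * a) : ℝ) : ℂ)) *
        (√(π / a) * cexp (π / 4 * I)))) := by
  set s : ℝ := r - k / (2 * a) with hs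
  have complete_square : ∀ u : ℝ, cexp (I * ((a * (u - r) ^ 2 + k * u : ℝ) : ℂ)) =
      cexp (I * ((k * r - k ^ 2 / (4 * a) : ℝ) : ℂ)) *
        cexp (-(-(a * I)) * ((u - s : ℝ) : ℂ) ^ 2) := fun u ↦ by
    have : a * (u - r) ^ 2 + k * u = (k * r - k ^ 2 / (4 * a)) + a * (u - s) ^ 2 := by
      rw [hs]
      field_simp
      ring
    rw [this, ← Complex.exp_add]
    push_cast
    ring_nf
  simp_rw [complete_square, intervalIntegral.integral_const_mul,
    integral_comp_sub_right (fun x : ℝ ↦ cexp (-(-(a * I)) * (x : ℂ) ^ 2)) s,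
    ← cpow_half_pi_div_neg_mul_I ha]
  exact (tendsto_integral_cexp_neg_mul_sq (by simp) (by simp [ha.ne'])
    (tendsto_atBot_add_const_right _ (-s) hx₁)
    (tendsto_atTop_add_const_right _ (-s) hx₂)).const_mul _

lemma fresnel_amplitude_mul {a : ℝ} (ha : 0 ≤ a) (a' : ℝ) :
    (√(π / a) * cexp (π / 4 * I)) * (√(π / a') * cexp (π / 4 * I)) = I * π / √(a * a') := by
  have eighth_turn_sq : cexp (π / 4 * I) * cexp (π / 4 * I) = I := by
    rw [← Complex.exp_add, ← add_mul, show (π / 4 + π / 4 : ℂ) = π / 2 by ring,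
      exp_pi_div_two_mul_I]
  have sqrt_mul_sqrt : √(π / a) * √(π / a') = π / √(a * a') := by
    rw [← Real.sqrt_mul (by positivity), div_mul_div_comm, Real.sqrt_div (by positivity),
      Real.sqrt_mul_self pi_pos.le]
  rw [mul_mul_mul_comm, eighth_turn_sq, ← ofReal_mul, sqrt_mul_sqrt]
  push_cast
  ring

lemma tendsto_integral_integral_cexp_I_mul_quadratic {a a' : ℝ} (ha : 0 < a) (ha' : 0 < a')
    (r s k k' : ℝ) (hx₁ : Tendsto x₁ l atBot) (hx₂ : Tendsto x₂ l atTop)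
    (hy₁ : Tendsto y₁ l atBot) (hy₂ : Tendsto y₂ l atTop) :
    Tendsto (fun i ↦ ∫ u in x₁ i..x₂ i, ∫ v in y₁ i..y₂ i,
        cexp (I * ((k * u + k' * v : ℝ) : ℂ)) *
          cexp (I * ((a * (u - r) ^ 2 + a' * (v - s) ^ 2 : ℝ) : ℂ))) l
      (nhds (I * π / √(a * a') * (cexp (I * ((k * r + k' * s : ℝ) : ℂ)) *
        cexp (-I * ((k ^ 2 / (4 * a) + k' ^ 2 / (4 * a') : ℝ) : ℂ))))) := by
  have separate : ∀ u v : ℝ, cexp (I * ((k * u + k' * v : ℝ) : ℂ)) *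
        cexp (I * ((a * (u - r) ^ 2 + a' * (v - s) ^ 2 : ℝ) : ℂ)) =
      cexp (I * ((a * (u - r) ^ 2 + k * u : ℝ) : ℂ)) *
        cexp (I * ((a' * (v - s) ^ 2 + k' * v : ℝ) : ℂ)) := fun u v ↦ by
    rw [← Complex.exp_add, ← Complex.exp_add]
    push_cast
    ring_nf
  have phase : cexp (I * ((k * r - k ^ 2 / (4 * a) : ℝ) : ℂ)) *
        cexp (I * ((k' * s - k' ^ 2 / (4 * a') : ℝ) : ℂ)) =
      cexp (I * ((k * r + k' * s : ℝ) : ℂ)) *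
        cexp (-I * ((k ^ 2 / (4 * a) + k' ^ 2 / (4 * a') : ℝ) : ℂ)) := by
    rw [← Complex.exp_add, ← Complex.exp_add]
    push_cast
    ring_nf
  simp_rw [separate, intervalIntegral.integral_const_mul, intervalIntegral.integral_mul_const]
  rw [← fresnel_amplitude_mul ha.le a', ← phase, mul_comm (_ * _ * _), ← mul_mul_mul_comm]
  exact (tendsto_integral_cexp_I_mul_quadratic ha r k hx₁ hx₂).mul
    (tendsto_integral_cexp_I_mul_quadratic ha' s k' hy₁ hy₂)

lemma integral_integral_sum_mul {ι : Type*} [Fintype ι] (b : ι → ℂ) {e : ι → ℝ → ℝ → ℂ}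
    {K : ℝ → ℝ → ℂ} (he : ∀ j, Continuous (e j).uncurry) (hK : Continuous K.uncurry)
    (x₁ x₂ y₁ y₂ : ℝ) :
    ∫ u in x₁..x₂, ∫ v in y₁..y₂, (∑ j, b j * e j u v) * K u v =
      ∑ j, b j * ∫ u in x₁..x₂, ∫ v in y₁..y₂, e j u v * K u v := by
  have cont : ∀ j, Continuous (fun u v ↦ e j u v * K u v).uncurry := fun j ↦ (he j).mul hK
  have inner : ∀ u, ∫ v in y₁..y₂, (∑ j, b j * e j u v) * K u v =
      ∑ j, b j * ∫ v in y₁..y₂, e j u v * K u v := fun u ↦ by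
    simp_rw [Finset.sum_mul, mul_assoc, ← intervalIntegral.integral_const_mul]
    exact integral_finsetSum fun j _ ↦
      (((cont j).comp (.prodMk_right u)).const_mul (b j)).intervalIntegrable _ _
  simp_rw [inner, ← intervalIntegral.integral_const_mul]
  refine integral_finsetSum fun j _ ↦ Continuous.intervalIntegrable ?_ _ _
  simp_rw [intervalIntegral.integral_const_mul]
  exact (continuous_parametric_intervalIntegral_of_continuous' (cont j) y₁ y₂).const_mul (b j)

lemma tendsto_integral_integral_sum_mul_cexp_I_mul_quadratic {ι : Type*} [Fintype ι] {a a' : ℝ}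
    (ha : 0 < a) (ha' : 0 < a') (r s : ℝ) (b : ι → ℂ) (k k' : ι → ℝ)
    (hx₁ : Tendsto x₁ l atBot) (hx₂ : Tendsto x₂ l atTop)
    (hy₁ : Tendsto y₁ l atBot) (hy₂ : Tendsto y₂ l atTop) :
    Tendsto (fun i ↦ ∫ u in x₁ i..x₂ i, ∫ v in y₁ i..y₂ i,
        (∑ j, b j * cexp (I * ((k j * u + k' j * v : ℝ) : ℂ))) *
          cexp (I * ((a * (u - r) ^ 2 + a' * (v - s) ^ 2 : ℝ) : ℂ))) l
      (nhds (I * π / √(a * a') * ∑ j, b j * (cexp (I * ((k j * r + k' j * s : ℝ) : ℂ)) *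
        cexp (-I * ((k j ^ 2 / (4 * a) + k' j ^ 2 / (4 * a') : ℝ) : ℂ))))) := by
  simp_rw [integral_integral_sum_mul b (e := fun j u v ↦ cexp (I * ((k j * u + k' j * v : ℝ) : ℂ)))
    (K := fun u v ↦ cexp (I * ((a * (u - r) ^ 2 + a' * (v - s) ^ 2 : ℝ) : ℂ)))
    (fun j ↦ by fun_prop) (by fun_prop), Finset.mul_sum, mul_left_comm _ (b _)]
  exact tendsto_finsetSum _ fun j _ ↦ (tendsto_integral_integral_cexp_I_mul_quadratic ha ha' r s
    (k j) (k' j) hx₁ hx₂ hy₁ hy₂).const_mul (b j)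

lemma tendsto_integral_integral_one_add_sum_mul_cexp_I_mul_quadratic {ι : Type*} [Fintype ι]
    {a a' : ℝ} (ha : 0 < a) (ha' : 0 < a') (r s : ℝ) (b : ι → ℂ) (k k' : ι → ℝ)
    (hx₁ : Tendsto x₁ l atBot) (hx₂ : Tendsto x₂ l atTop)
    (hy₁ : Tendsto y₁ l atBot) (hy₂ : Tendsto y₂ l atTop) :
    Tendsto (fun i ↦ ∫ u in x₁ i..x₂ i, ∫ v in y₁ i..y₂ i,
        (1 + ∑ j, b j * cexp (I * ((k j * u + k' j * v : ℝ) : ℂ))) *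
          cexp (I * ((a * (u - r) ^ 2 + a' * (v - s) ^ 2 : ℝ) : ℂ))) l
      (nhds (I * π / √(a * a') * (1 + ∑ j, b j * cexp (I * ((k j * r + k' j * s : ℝ) : ℂ)) *
        cexp (-I * ((k j ^ 2 / (4 * a) + k' j ^ 2 / (4 * a') : ℝ) : ℂ))))) := by
  -- The unperturbed field is a ripple of unit coefficient and zero frequency, indexed by `none`.
  simpa [Fintype.sum_option, mul_assoc] using
    tendsto_integral_integral_sum_mul_cexp_I_mul_quadratic (ι := Option ι) ha ha' r s
      (fun j ↦ j.elim 1 b) (fun j ↦ j.elim 0 k) (fun j ↦ j.elim 0 k') hx₁ hx₂ hy₁ hy₂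

end ImproperIntegral

end FresnelIntegral

lemma fresnel_prefactor_mul_amplitude {p q lam Z : ℝ} (hp : 0 < p) (hq : 0 < q) (hlam : 0 < lam)
    (hZ : 0 < Z) :
    1 / (Complex.I * lam * Z) *
        (Complex.I * π / √(π / (lam * Z) * p * (π / (lam * Z) * q))) =
      ((1 / √(p * q) : ℝ) : ℂ) := by
  have hκ : 0 < π / (lam * Z) := by positivity
  have hlam₀ : (lam : ℂ) ≠ 0 := mod_cast hlam.ne'
  have hZ₀ : (Z : ℂ) ≠ 0 := mod_cast hZ.ne'
  have hpq : (√(p * q) : ℂ) ≠ 0 := mod_cast (Real.sqrt_pos.2 (mul_pos hp hq)).ne'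
  rw [mul_mul_mul_comm (π / (lam * Z)), Real.sqrt_mul (by positivity), Real.sqrt_mul_self hκ.le]
  push_cast
  field_simp

lemma angularSpectrum_phase {p q lam Z : ℝ} (hp : p ≠ 0) (hq : q ≠ 0) (hlam : lam ≠ 0)
    (hZ : Z ≠ 0) (D N β : ℝ) :
    (2 * π * N / D * Real.cos β) ^ 2 / (4 * (π / (lam * Z) * p)) +
        (2 * π * N / D * Real.sin β) ^ 2 / (4 * (π / (lam * Z) * q)) =
      π * lam * Z * N ^ 2 / D ^ 2 * (Real.cos β ^ 2 / p + Real.sin β ^ 2 / q) := by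
  field_simp
  ring

/-- Propagation of an aberrated wavefront through the PIAA kernel (Section 4): an input
field `1 + Σⱼ bⱼ exp(i(2πNⱼ/D)(u cos βⱼ + v sin βⱼ))` propagated through the Fresnel-type
kernel with radial weight `p` and tangential weight `q` converges (square truncation) to
the apodized sum of remapped ripples, each multiplied by its angular-spectrum factor. -/
theorem piaa_aberrated_field_propagation {ι : Type*} [Fintype ι]
    (p q lam Z : ℝ) (hp : 0 < p) (hq : 0 < q) (hlam : 0 < lam) (hZ : 0 < Z)
    (D r₀ : ℝ) (hD : D ≠ 0) (b : ι → ℂ) (N β : ι → ℝ) :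
    Tendsto (fun R : ℝ =>
        (1 / (Complex.I * lam * Z)) *
          ∫ u in (-R)..R, ∫ v in (-R)..R,
            (1 + ∑ j : ι, b j *
                Complex.exp (Complex.I *
                  (((2 * π * N j / D) * (u * Real.cos (β j) + v * Real.sin (β j)) : ℝ) : ℂ))) *
              Complex.exp (Complex.I *
                (((π / (lam * Z)) * (p * (u - r₀) ^ 2 + q * v ^ 2) : ℝ) : ℂ)))
      atTop
      (nhds (((1 / Real.sqrt (p * q) : ℝ) : ℂ) *
        (1 + ∑ j : ι, b j *
            Complex.exp (Complex.I * (((2 * π * N j / D) * r₀ * Real.cos (β j) : ℝ) : ℂ)) *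
            Complex.exp (-Complex.I *
              (((π * lam * Z * N j ^ 2 / D ^ 2) *
                  ((Real.cos (β j)) ^ 2 / p + (Real.sin (β j)) ^ 2 / q) : ℝ) : ℂ))))) := by
  have hκ : 0 < π / (lam * Z) := by positivity
  have ripple : ∀ (j : ι) (u v : ℝ),
      2 * π * N j / D * (u * Real.cos (β j) + v * Real.sin (β j)) =
        2 * π * N j / D * Real.cos (β j) * u + 2 * π * N j / D * Real.sin (β j) * v := by
    intros; ring
  have remapped : ∀ j : ι, 2 * π * N j / D * r₀ * Real.cos (β j) =
      2 * π * N j / D * Real.cos (β j) * r₀ + 2 * π * N j / D * Real.sin (β j) * 0 := by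
    intros; ring
  have kernel : ∀ u v : ℝ, π / (lam * Z) * (p * (u - r₀) ^ 2 + q * v ^ 2) =
      π / (lam * Z) * p * (u - r₀) ^ 2 + π / (lam * Z) * q * (v - 0) ^ 2 := by
    intros; ring
  simp_rw [ripple, remapped, kernel, ← fresnel_prefactor_mul_amplitude hp hq hlam hZ,
    ← angularSpectrum_phase hp.ne' hq.ne' hlam.ne' hZ.ne', mul_assoc (1 / _ : ℂ)]
  exact (tendsto_integral_integral_one_add_sum_mul_cexp_I_mul_quadratic (mul_pos hκ hp)
    (mul_pos hκ hq) r₀ 0 b _ _ tendsto_neg_atTop_atBot tendsto_id tendsto_neg_atTop_atBot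
    tendsto_id).const_mul _
end
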